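/- (Averaged Fourier energy over hyperplanes.) Let d ≥ 2 and α > 0. There exists a constant c_d > 0, depending only on d, such that for every finite Borel measure ν with compact support on ℝ^d, ∫_{S^{d−1}} ∫_{v^⊥} |ξ|^{α−(d−1)} |ν̂(ξ)|² dH^{d−1}(ξ) dH^{d−1}(v) = c_d · I_α(ν), where for each unit vector v ∈ S^{d−1}, v^⊥ denotes the hyperplane in ℝ^d orthogonal to v and H^{d−1} denotes (d−1)-dimensional Hausdorff measure. -/

import Mathlib

open MeasureTheory Real Metric Set
open scoped RealInnerProductSpace ENNReal NNReal

noncomputable section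

/-- The Fourier transform of a measure. -/
def ftM {d : ℕ} (ν : Measure (EuclideanSpace ℝ (Fin d))) (ξ : EuclideanSpace ℝ (Fin d)) : ℂ :=
  ∫ x, Complex.exp (-(Complex.I * Complex.ofReal ⟪x, ξ⟫)) ∂ν

/-- The Fourier energy `I_α(ν) = ∫ |ν̂(ξ)|² |ξ|^{α-d} dξ` (as an extended real). -/
def fourierEnergyL {d : ℕ} (α : ℝ) (ν : Measure (EuclideanSpace ℝ (Fin d))) : ℝ≥0∞ :=
  ∫⁻ ξ, (‖ftM ν ξ‖₊ : ℝ≥0∞) ^ 2 * ENNReal.ofReal (‖ξ‖ ^ (α - (d : ℝ)))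

/-- `ν` is a finite Borel measure compactly supported inside `A`. -/
def MeasureIn {d : ℕ} (ν : Measure (EuclideanSpace ℝ (Fin d)))
    (A : Set (EuclideanSpace ℝ (Fin d))) : Prop :=
  IsFiniteMeasure ν ∧ ∃ K, IsCompact K ∧ K ⊆ A ∧ ν Kᶜ = 0

section helpers

variable {E : Type} [NormedAddCommGroup E] [InnerProductSpace ℝ E] [FiniteDimensional ℝ E]
  [MeasurableSpace E] [BorelSpace E]

/-- Averaging over the orthogonal group. -/
lemma exists_avg : ∃ (G : Type) (_ : MeasurableSpace G) (m : Measure G)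
    (_ : IsProbabilityMeasure m) (ρ : G → (E ≃ₗᵢ[ℝ] E)),
    Measurable (fun p : G × E => ρ p.1 p.2) ∧
    ∀ f : E → ℝ≥0∞, ∀ h : E ≃ₗᵢ[ℝ] E, ∀ ξ : E,
      ∫⁻ g, f (ρ g (h ξ)) ∂m = ∫⁻ g, f (ρ g ξ) ∂m := by
  have : ProperSpace (E →L[ℝ] E) := FiniteDimensional.proper ℝ _
  have hcpt : IsCompact (unitary (E →L[ℝ] E) : Set (E →L[ℝ] E)) := by
    apply Metric.isCompact_of_isClosed_isBounded isClosed_unitary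
    refine (Metric.isBounded_closedBall (x := (0 : E →L[ℝ] E)) (r := 1)).subset ?_
    intro u hu
    rw [mem_closedBall_zero_iff]
    refine ContinuousLinearMap.opNorm_le_bound _ zero_le_one fun x => ?_
    rw [one_mul]
    exact (Unitary.norm_map ⟨u, hu⟩ x).le
  let G := unitary (E →L[ℝ] E)
  have : CompactSpace G := isCompact_iff_compactSpace.mp hcpt
  let _ : MeasurableSpace G := borel G
  have : BorelSpace G := ⟨rfl⟩
  let K : TopologicalSpace.PositiveCompacts G := ⊤
  let m : Measure G := Measure.haarMeasure K
  have hm : IsProbabilityMeasure m := ⟨by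
    have := Measure.haarMeasure_self (K₀ := K)
    simpa [K] using this⟩
  refine ⟨G, inferInstance, m, hm, fun g => Unitary.linearIsometryEquiv g⁻¹, ?_, ?_⟩
  · have : SecondCountableTopology (E →L[ℝ] E) := inferInstance
    have : SecondCountableTopology G := inferInstance
    have : Continuous (fun p : G × E => ((p.1⁻¹ : G) : E →L[ℝ] E) p.2) := by
      refine Continuous.clm_apply ?_ continuous_snd
      exact continuous_subtype_val.comp (continuous_inv.comp continuous_fst)
    exact this.measurable
  · intro f h ξ
    let k : G := Unitary.linearIsometryEquiv.symm h
    have hk : h = Unitary.linearIsometryEquiv k := by simp [k]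
    rw [← lintegral_mul_left_eq_self (μ := m) (fun g => f (Unitary.linearIsometryEquiv g⁻¹ ξ)) k⁻¹]
    refine lintegral_congr fun g => ?_
    rw [mul_inv_rev, inv_inv, map_mul, ← hk]
    rfl

/-- Radial integration. -/
lemma lintegral_radial [Nontrivial E] (μ : Measure E) [μ.IsAddHaarMeasure] (F : ℝ → ℝ≥0∞)
    (hF : Measurable F) :
    ∫⁻ x, F ‖x‖ ∂μ = μ.toSphere univ *
      ∫⁻ r in Ioi (0 : ℝ), ENNReal.ofReal (r ^ (Module.finrank ℝ E - 1)) * F r := by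
  have h0 : ∫⁻ x, F ‖x‖ ∂μ = ∫⁻ x : ({0}ᶜ : Set E), F ‖(x : E)‖ ∂(μ.comap (↑)) := by
    rw [lintegral_subtype_comap (measurableSet_singleton _).compl (fun x : E => F ‖x‖),
      restrict_compl_singleton]
  rw [h0]
  have h1 := (μ.measurePreserving_homeomorphUnitSphereProd).lintegral_comp
    (f := fun p : sphere (0 : E) 1 × Ioi (0 : ℝ) => F p.2)
    (hF.comp (measurable_subtype_coe.comp measurable_snd))
  have h2 : ∀ x : ({0}ᶜ : Set E), (((homeomorphUnitSphereProd E) x).2 : ℝ) = ‖(x : E)‖ :=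
    fun x => by simp
  simp only [h2] at h1
  rw [h1, lintegral_prod (fun p : sphere (0 : E) 1 × Ioi (0 : ℝ) => F p.2)
    (hF.comp (measurable_subtype_coe.comp measurable_snd)).aemeasurable]
  simp only [lintegral_const]
  rw [mul_comm]
  congr 1
  rw [Measure.volumeIoiPow, lintegral_withDensity_eq_lintegral_mul _ (by fun_prop)
    (show Measurable (fun y : Ioi (0 : ℝ) => F y) from hF.comp measurable_subtype_coe)]
  rw [← lintegral_subtype_comap measurableSet_Ioi]
  rfl

lemma lipschitz_normalize (x y : E) (hx : 1 ≤ ‖x‖) (hy : 1 ≤ ‖y‖) :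
    ‖‖x‖⁻¹ • x - ‖y‖⁻¹ • y‖ ≤ 2 * ‖x - y‖ := by
  have hx0 : 0 < ‖x‖ := by linarith
  have hy0 : 0 < ‖y‖ := by linarith
  have e : ‖x‖⁻¹ • x - ‖y‖⁻¹ • y = ‖x‖⁻¹ • (x - y) + (‖x‖⁻¹ - ‖y‖⁻¹) • y := by module
  have h1 : |‖x‖⁻¹ - ‖y‖⁻¹| * ‖y‖ = ‖x‖⁻¹ * |‖y‖ - ‖x‖| := by
    have : (‖x‖⁻¹ - ‖y‖⁻¹) * ‖y‖ = ‖x‖⁻¹ * (‖y‖ - ‖x‖) := by field_simp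
    have h := congrArg abs this
    rwa [abs_mul, abs_mul, abs_norm, abs_of_pos (inv_pos.2 hx0)] at h
  have h2 : |‖y‖ - ‖x‖| ≤ ‖x - y‖ := by
    rw [norm_sub_rev]; exact abs_norm_sub_norm_le y x
  have h3 : ‖x‖⁻¹ ≤ 1 := inv_le_one_of_one_le₀ hx
  calc _ ≤ ‖‖x‖⁻¹ • (x - y)‖ + ‖(‖x‖⁻¹ - ‖y‖⁻¹) • y‖ := by rw [e]; exact norm_add_le _ _
    _ = ‖x‖⁻¹ * ‖x - y‖ + ‖x‖⁻¹ * |‖y‖ - ‖x‖| := by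
        rw [norm_smul, norm_smul, norm_inv, norm_norm, Real.norm_eq_abs, h1]
    _ ≤ 1 * ‖x - y‖ + 1 * ‖x - y‖ := by gcongr
    _ = _ := by ring

lemma finrank_perp {n : ℕ} (hE : Module.finrank ℝ E = n + 1) {e : E} (he : ‖e‖ = 1) :
    Module.finrank ℝ (ℝ ∙ e)ᗮ = n := by
  have : Fact (Module.finrank ℝ E = n + 1) := ⟨hE⟩
  exact Submodule.finrank_orthogonal_span_singleton (by rintro rfl; simp at he)

lemma haar_perp {n : ℕ} (hE : Module.finrank ℝ E = n + 1) {e : E} (he : ‖e‖ = 1) :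
    (μH[(n : ℝ)] : Measure (ℝ ∙ e)ᗮ).IsAddHaarMeasure := by
  have := isAddHaarMeasure_hausdorffMeasure (E := (ℝ ∙ e)ᗮ)
  rwa [finrank_perp hE he] at this

lemma sphere_finite {n : ℕ} (hE : Module.finrank ℝ E = n + 1) :
    (μH[(n : ℝ)] : Measure E) (sphere 0 1) < ∞ := by
  refine (isCompact_sphere (0 : E) 1).measure_lt_top_of_nhdsWithin fun u hu => ?_
  have hu1 : ‖u‖ = 1 := by simpa using hu
  have := haar_perp hE hu1
  let φ : (ℝ ∙ u)ᗮ → E := fun x => ‖(x : E) + u‖⁻¹ • ((x : E) + u)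
  have hin : ∀ x : (ℝ ∙ u)ᗮ, ⟪u, (x : E)⟫ = 0 := fun x =>
    Submodule.mem_orthogonal_singleton_iff_inner_right.1 x.2
  have h1 : ∀ x : (ℝ ∙ u)ᗮ, 1 ≤ ‖(x : E) + u‖ := fun x => by
    have := real_inner_le_norm u ((x : E) + u)
    rw [inner_add_right, hin, real_inner_self_eq_norm_sq, hu1] at this
    linarith
  have hφ : LipschitzWith 2 φ := by
    refine LipschitzWith.of_dist_le_mul fun x y => ?_
    rw [dist_eq_norm, dist_eq_norm]
    have := lipschitz_normalize _ _ (h1 x) (h1 y)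
    simpa [φ] using this
  have hlt : (μH[(n : ℝ)] : Measure E) (φ '' closedBall 0 3) < ∞ := by
    refine (hφ.hausdorffMeasure_image_le (Nat.cast_nonneg n) _).trans_lt ?_
    refine ENNReal.mul_lt_top ?_ measure_closedBall_lt_top
    exact ENNReal.rpow_lt_top_of_nonneg (Nat.cast_nonneg n) (by simp)
  refine ⟨φ '' closedBall 0 3, ?_, hlt⟩
  have hopen : IsOpen {w : E | 1 / 2 < ⟪u, w⟫} := isOpen_lt continuous_const (by fun_prop)
  have hmem : u ∈ {w : E | 1 / 2 < ⟪u, w⟫} := by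
    simp only [mem_ofPred_eq, real_inner_self_eq_norm_sq, hu1]; norm_num
  filter_upwards [mem_nhdsWithin_of_mem_nhds (hopen.mem_nhds hmem), self_mem_nhdsWithin]
    with w hw hws
  have hw1 : ‖w‖ = 1 := by simpa using hws
  replace hw : 1 / 2 < ⟪u, w⟫ := hw
  set t := ⟪u, w⟫ with ht
  have ht0 : 0 < t := by linarith
  refine ⟨⟨t⁻¹ • w - u, ?_⟩, ?_, ?_⟩
  · rw [Submodule.mem_orthogonal_singleton_iff_inner_right, inner_sub_right, inner_smul_right,
      real_inner_self_eq_norm_sq, hu1, ← ht]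
    field_simp; norm_num
  · rw [mem_closedBall_zero_iff]
    change ‖t⁻¹ • w - u‖ ≤ 3
    have : t⁻¹ ≤ 2 := by
      rw [inv_le_comm₀ ht0 (by norm_num)]; linarith
    calc _ ≤ ‖t⁻¹ • w‖ + ‖u‖ := norm_sub_le _ _
      _ = t⁻¹ + 1 := by rw [norm_smul, hw1, hu1, norm_inv, Real.norm_of_nonneg ht0.le, mul_one]
      _ ≤ 3 := by linarith
  · simp only [φ, sub_add_cancel, norm_smul, hw1, norm_inv, Real.norm_of_nonneg ht0.le, mul_one,
      inv_inv, smul_smul]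
    rw [mul_inv_cancel₀ ht0.ne', one_smul]

lemma sphere_pos {n : ℕ} (hE : Module.finrank ℝ E = n + 1) {e : E} (he : ‖e‖ = 1) :
    0 < (μH[(n : ℝ)] : Measure E) (sphere 0 1) := by
  have := haar_perp hE he
  have hL : LipschitzWith 1 ((ℝ ∙ e)ᗮ.orthogonalProjectionOnto) := by
    refine ContinuousLinearMap.lipschitzWith_of_opNorm_le ?_
    exact Submodule.orthogonalProjectionOnto_norm_le _
  have h := hL.hausdorffMeasure_image_le (Nat.cast_nonneg n) (sphere (0 : E) 1)
  simp only [ENNReal.coe_one, ENNReal.one_rpow, one_mul] at h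
  refine lt_of_lt_of_le ?_ h
  refine lt_of_lt_of_le (measure_ball_pos (μH[(n : ℝ)]) (0 : (ℝ ∙ e)ᗮ) one_pos)
    (measure_mono ?_)
  intro y hy
  rw [mem_ball_zero_iff] at hy
  have hin : ⟪e, (y : E)⟫ = 0 := Submodule.mem_orthogonal_singleton_iff_inner_right.1 y.2
  have hy' : 0 ≤ 1 - ‖y‖ ^ 2 := by nlinarith [norm_nonneg y]
  refine ⟨y + √(1 - ‖y‖ ^ 2) • e, ?_, ?_⟩
  · rw [mem_sphere_zero_iff_norm, ← sq_eq_sq₀ (norm_nonneg _) zero_le_one, norm_add_sq_real,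
      inner_smul_right, real_inner_comm, hin, norm_smul, he, Real.norm_of_nonneg (sqrt_nonneg _)]
    rw [mul_one, Real.sq_sqrt hy']
    simp
  · rw [map_add, map_smul]
    have : (ℝ ∙ e)ᗮ.orthogonalProjectionOnto e = 0 := by
      apply Submodule.orthogonalProjectionOnto_orthogonal_apply_eq_zero
      exact Submodule.mem_span_singleton_self e
    rw [this]
    simp

/-- Integrals over hyperplanes are equivariant. -/
lemma lintegral_perp_map (n : ℕ) (g : E ≃ₗᵢ[ℝ] E) (v : E) (f : E → ℝ≥0∞) :
    ∫⁻ ξ in {ξ : E | ⟪g v, ξ⟫ = 0}, f ξ ∂μH[(n : ℝ)]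
      = ∫⁻ ξ in {ξ : E | ⟪v, ξ⟫ = 0}, f (g ξ) ∂μH[(n : ℝ)] := by
  have hmp : MeasurePreserving g (μH[(n : ℝ)] : Measure E) μH[(n : ℝ)] :=
    g.toIsometryEquiv.measurePreserving_hausdorffMeasure _
  rw [← hmp.setLIntegral_comp_preimage_emb g.toHomeomorph.measurableEmbedding]
  congr 2
  ext ξ
  change ⟪g v, g ξ⟫ = 0 ↔ ⟪v, ξ⟫ = 0
  rw [g.inner_map_map]

lemma restrict_perp {n : ℕ} (e : E) :
    (μH[(n : ℝ)] : Measure E).restrict {ξ : E | ⟪e, ξ⟫ = 0}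
      = (μH[(n : ℝ)] : Measure (ℝ ∙ e)ᗮ).map (↑) := by
  rw [isometry_subtype_coe.map_hausdorffMeasure (Or.inl (Nat.cast_nonneg n))]
  congr 1
  ext ξ
  rw [Subtype.range_coe]
  exact Submodule.mem_orthogonal_singleton_iff_inner_right.symm

/-- Householder map. -/
def hh (e v ξ : E) : E := ξ - (2 * (⟪e - v, ξ⟫ / ‖e - v‖ ^ 2)) • (e - v)

lemma exists_hh (e v : E) (h : ‖e‖ = ‖v‖) :
    ∃ g : E ≃ₗᵢ[ℝ] E, g e = v ∧ ∀ ξ, g ξ = hh e v ξ := by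
  refine ⟨(ℝ ∙ (e - v))ᗮ.reflection, Submodule.reflection_sub h, fun ξ => ?_⟩
  rw [Submodule.reflection_orthogonal_apply, Submodule.reflection_singleton_apply, hh]
  simp only [RCLike.ofReal_real_eq_id, id]
  module

lemma measurable_hh (e : E) : Measurable (fun p : E × E => hh e p.1 p.2) := by
  unfold hh
  fun_prop

lemma hyperplane_formula {n : ℕ} (hn : 1 ≤ n) (hE : Module.finrank ℝ E = n + 1)
    (μ : Measure E) [μ.IsAddHaarMeasure]
    (hμ : ∀ h : E ≃ₗᵢ[ℝ] E, MeasurePreserving h μ μ) :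
    ∃ C : ℝ≥0∞, C ≠ 0 ∧ C ≠ ∞ ∧ ∀ f : E → ℝ≥0∞, Measurable f →
      ∫⁻ v in sphere (0 : E) 1, (∫⁻ ξ in {ξ : E | ⟪v, ξ⟫ = 0}, f ξ ∂μH[(n : ℝ)]) ∂μH[(n : ℝ)]
        = C * ∫⁻ ξ, f ξ * ENNReal.ofReal (‖ξ‖⁻¹) ∂μ := by
  have : Nontrivial E := Module.nontrivial_of_finrank_pos (R := ℝ) (by omega)
  obtain ⟨e, he⟩ := exists_norm_eq E zero_le_one
  have hW := finrank_perp hE he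
  have : Nontrivial (ℝ ∙ e)ᗮ := Module.nontrivial_of_finrank_pos (R := ℝ) (by omega)
  have := haar_perp hE he
  set S : ℝ≥0∞ := (μH[(n : ℝ)] : Measure E) (sphere 0 1) with hS
  have hS0 : S ≠ 0 := (sphere_pos hE he).ne'
  have hSt : S ≠ ∞ := (sphere_finite hE).ne
  set A : ℝ≥0∞ := (μH[(n : ℝ)] : Measure (ℝ ∙ e)ᗮ).toSphere univ with hA
  have hA0 : A ≠ 0 := by
    rw [hA, Ne, Measure.measure_univ_eq_zero]; exact Measure.toSphere_ne_zero _
  have hAt : A ≠ ∞ := measure_ne_top _ _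
  set B : ℝ≥0∞ := μ.toSphere univ with hB
  have hB0 : B ≠ 0 := by
    rw [hB, Ne, Measure.measure_univ_eq_zero]; exact Measure.toSphere_ne_zero _
  have hBt : B ≠ ∞ := measure_ne_top _ _
  obtain ⟨G, mG, m, hm, ρ, hρ, hinv⟩ := exists_avg (E := E)
  refine ⟨S * A / B, ENNReal.div_ne_zero.2 ⟨mul_ne_zero hS0 hA0, hBt⟩,
    ENNReal.div_ne_top (ENNReal.mul_ne_top hSt hAt) hB0, fun f hf => ?_⟩
  -- the average of `f`
  let F : E → ℝ≥0∞ := fun ξ => ∫⁻ g, f (ρ g ξ) ∂m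
  have hFm : Measurable F := by
    refine Measurable.lintegral_prod_left' (f := fun p : G × E => f (ρ p.1 p.2)) (hf.comp hρ)
  let Φ : ℝ → ℝ≥0∞ := fun r => F (r • e)
  have hΦm : Measurable Φ := hFm.comp (by fun_prop)
  have hFΦ : ∀ ξ, F ξ = Φ ‖ξ‖ := fun ξ => by
    obtain ⟨g, hg, -⟩ := exists_hh (‖ξ‖ • e) ξ (by rw [norm_smul, he]; simp)
    simp only [Φ, F]
    rw [← hinv f g (‖ξ‖ • e), hg]
  -- the right hand side
  have hR : ∫⁻ ξ, f ξ * ENNReal.ofReal (‖ξ‖⁻¹) ∂μ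
      = B * ∫⁻ r in Ioi (0 : ℝ), ENNReal.ofReal (r ^ (n - 1)) * Φ r := by
    have h1 : ∀ g : G, ∫⁻ ξ, f ξ * ENNReal.ofReal (‖ξ‖⁻¹) ∂μ
        = ∫⁻ ξ, f (ρ g ξ) * ENNReal.ofReal (‖ξ‖⁻¹) ∂μ := fun g => by
      rw [← (hμ (ρ g)).lintegral_comp (by fun_prop)]
      simp
    have h2 : ∫⁻ ξ, f ξ * ENNReal.ofReal (‖ξ‖⁻¹) ∂μ
        = ∫⁻ ξ, Φ ‖ξ‖ * ENNReal.ofReal (‖ξ‖⁻¹) ∂μ := by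
      calc _ = ∫⁻ _ : G, ∫⁻ ξ, f ξ * ENNReal.ofReal (‖ξ‖⁻¹) ∂μ ∂m := by simp
        _ = ∫⁻ g : G, ∫⁻ ξ, f (ρ g ξ) * ENNReal.ofReal (‖ξ‖⁻¹) ∂μ ∂m := lintegral_congr h1
        _ = ∫⁻ ξ, ∫⁻ g : G, f (ρ g ξ) * ENNReal.ofReal (‖ξ‖⁻¹) ∂m ∂μ := by
          refine lintegral_lintegral_swap (Measurable.aemeasurable ?_)
          exact (hf.comp hρ).mul (by fun_prop)
        _ = _ := by
          refine lintegral_congr fun ξ => ?_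
          rw [lintegral_mul_const' _ _ ENNReal.ofReal_ne_top, ← hFΦ]
    rw [h2, lintegral_radial μ (fun r => Φ r * ENNReal.ofReal (r⁻¹)) (by fun_prop), hE]
    congr 1
    refine setLIntegral_congr_fun measurableSet_Ioi fun r hr => ?_
    have hr' : (0 : ℝ) < r := hr
    rw [mul_comm (Φ r), ← mul_assoc, ← ENNReal.ofReal_mul (by positivity)]
    congr 2
    obtain ⟨k, rfl⟩ : ∃ k, n = k + 1 := ⟨n - 1, by omega⟩
    simp only [Nat.add_sub_cancel, pow_succ]
    field_simp
  -- the left hand side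
  have : SFinite ((μH[(n : ℝ)] : Measure E).restrict {ξ : E | ⟪e, ξ⟫ = 0}) := by
    rw [restrict_perp]; infer_instance
  have hfin : IsFiniteMeasure ((μH[(n : ℝ)] : Measure E).restrict (sphere 0 1)) :=
    ⟨by rw [Measure.restrict_apply_univ]; exact sphere_finite hE⟩
  let N : E → ℝ≥0∞ := fun v => ∫⁻ ξ in {ξ : E | ⟪v, ξ⟫ = 0}, f ξ ∂μH[(n : ℝ)]
  let N' : E → ℝ≥0∞ := fun v => ∫⁻ ξ in {ξ : E | ⟪e, ξ⟫ = 0}, f (hh e v ξ) ∂μH[(n : ℝ)]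
  have hN' : Measurable N' :=
    Measurable.lintegral_prod_right' (f := fun p : E × E => f (hh e p.1 p.2))
      (hf.comp (measurable_hh e))
  have hNN' : ∀ v, ‖v‖ = 1 → N v = N' v := fun v hv => by
    obtain ⟨g, hg, hg'⟩ := exists_hh e v (by rw [he, hv])
    simp only [N, N']
    simp only [← hg']
    rw [← lintegral_perp_map, hg]
  have hsph : ∀ h : E ≃ₗᵢ[ℝ] E,
      MeasurePreserving h ((μH[(n : ℝ)] : Measure E).restrict (sphere 0 1))
        ((μH[(n : ℝ)] : Measure E).restrict (sphere 0 1)) := fun h => by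
    have hmp : MeasurePreserving h (μH[(n : ℝ)] : Measure E) μH[(n : ℝ)] :=
      h.toIsometryEquiv.measurePreserving_hausdorffMeasure _
    have := hmp.restrict_preimage_emb h.toHomeomorph.measurableEmbedding (sphere 0 1)
    have e1 : h ⁻¹' sphere 0 1 = sphere 0 1 := by ext; simp
    rwa [e1] at this
  have hcong : ∫⁻ v in sphere (0 : E) 1, N v ∂μH[(n : ℝ)]
      = ∫⁻ v in sphere (0 : E) 1, N' v ∂μH[(n : ℝ)] :=
    setLIntegral_congr_fun isClosed_sphere.measurableSet fun v hv => hNN' v (by simpa using hv)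
  have hconst : ∀ v, ‖v‖ = 1 →
      ∫⁻ g, N' (ρ g v) ∂m = A * ∫⁻ r in Ioi (0 : ℝ), ENNReal.ofReal (r ^ (n - 1)) * Φ r := by
    intro v hv
    obtain ⟨k, hk, -⟩ := exists_hh e v (by rw [he, hv])
    rw [← hk, hinv N' k e]
    calc ∫⁻ g, N' (ρ g e) ∂m
        = ∫⁻ g, ∫⁻ ξ in {ξ : E | ⟪e, ξ⟫ = 0}, f (ρ g ξ) ∂μH[(n : ℝ)] ∂m := by
          refine lintegral_congr fun g => ?_
          rw [← hNN' _ (by rw [LinearIsometryEquiv.norm_map, he])]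
          exact lintegral_perp_map n (ρ g) e f
      _ = ∫⁻ ξ in {ξ : E | ⟪e, ξ⟫ = 0}, ∫⁻ g, f (ρ g ξ) ∂m ∂μH[(n : ℝ)] :=
          lintegral_lintegral_swap (hf.comp hρ).aemeasurable
      _ = ∫⁻ ξ in {ξ : E | ⟪e, ξ⟫ = 0}, Φ ‖ξ‖ ∂μH[(n : ℝ)] := lintegral_congr hFΦ
      _ = ∫⁻ ξ : (ℝ ∙ e)ᗮ, Φ ‖ξ‖ ∂μH[(n : ℝ)] := by
          rw [restrict_perp, lintegral_map (by fun_prop) measurable_subtype_coe]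
          rfl
      _ = _ := by rw [lintegral_radial _ _ hΦm, hW]
  have hL : ∫⁻ v in sphere (0 : E) 1, N' v ∂μH[(n : ℝ)]
      = S * (A * ∫⁻ r in Ioi (0 : ℝ), ENNReal.ofReal (r ^ (n - 1)) * Φ r) := by
    calc _ = ∫⁻ _ : G, ∫⁻ v in sphere (0 : E) 1, N' v ∂μH[(n : ℝ)] ∂m := by simp
      _ = ∫⁻ g : G, ∫⁻ v in sphere (0 : E) 1, N' (ρ g v) ∂μH[(n : ℝ)] ∂m :=
        lintegral_congr fun g => ((hsph (ρ g)).lintegral_comp hN').symm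
      _ = ∫⁻ v in sphere (0 : E) 1, ∫⁻ g : G, N' (ρ g v) ∂m ∂μH[(n : ℝ)] :=
        lintegral_lintegral_swap (hN'.comp hρ).aemeasurable
      _ = ∫⁻ _ in sphere (0 : E) 1,
          (A * ∫⁻ r in Ioi (0 : ℝ), ENNReal.ofReal (r ^ (n - 1)) * Φ r) ∂μH[(n : ℝ)] :=
        setLIntegral_congr_fun isClosed_sphere.measurableSet fun v hv => hconst v (by simpa using hv)
      _ = _ := by rw [setLIntegral_const, mul_comm]
  change ∫⁻ v in sphere (0 : E) 1, N v ∂μH[(n : ℝ)] = _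
  rw [hcong, hL, hR, ← mul_assoc, ← mul_assoc, ENNReal.div_mul_cancel hB0 hBt]

end helpers

/-- averaged Fourier energy over hyperplanes. There is a constant
`c_d > 0`, depending only on `d`, such that for every `α > 0` and every compactly
supported finite Borel measure `ν` on `ℝ^d`,
`∫_{S^{d-1}} ∫_{v^⊥} |ξ|^{α-(d-1)} |ν̂(ξ)|² dH^{d-1}(ξ) dH^{d-1}(v) = c_d I_α(ν)`. -/
theorem averaged_fourier_energy (d : ℕ) (hd : 2 ≤ d) :
    ∃ c : ℝ, 0 < c ∧ ∀ α : ℝ, 0 < α →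
      ∀ ν : Measure (EuclideanSpace ℝ (Fin d)), MeasureIn ν univ →
        ∫⁻ v in sphere (0 : EuclideanSpace ℝ (Fin d)) 1,
          (∫⁻ ξ in {ξ : EuclideanSpace ℝ (Fin d) | ⟪v, ξ⟫ = 0},
              ENNReal.ofReal (‖ξ‖ ^ (α - ((d : ℝ) - 1))) * (‖ftM ν ξ‖₊ : ℝ≥0∞) ^ 2
                ∂(μH[(d : ℝ) - 1]))
            ∂(μH[(d : ℝ) - 1])
          = ENNReal.ofReal c * fourierEnergyL α ν := by
  obtain ⟨n, rfl⟩ : ∃ n, d = n + 1 := ⟨d - 1, by omega⟩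
  have hcast : (((n + 1 : ℕ) : ℝ) - 1) = (n : ℝ) := by push_cast; ring
  obtain ⟨C, hC0, hCt, hC⟩ := hyperplane_formula (E := EuclideanSpace ℝ (Fin (n + 1)))
    (n := n) (by omega) (by simp) volume (fun h => h.measurePreserving)
  refine ⟨C.toReal, ENNReal.toReal_pos hC0 hCt, fun α hα ν hν => ?_⟩
  have : IsFiniteMeasure ν := hν.1
  have hft : Measurable (ftM ν) := by
    refine StronglyMeasurable.measurable ?_
    unfold ftM
    refine StronglyMeasurable.integral_prod_left'
      (f := fun p : EuclideanSpace ℝ (Fin (n + 1)) × EuclideanSpace ℝ (Fin (n + 1)) =>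
        Complex.exp (-(Complex.I * Complex.ofReal ⟪p.1, p.2⟫))) ?_
    exact Continuous.stronglyMeasurable (by fun_prop)
  rw [hcast, hC _ (by fun_prop), ENNReal.ofReal_toReal hCt, fourierEnergyL]
  congr 1
  have hae : ∀ᵐ ξ : EuclideanSpace ℝ (Fin (n + 1)), ξ ≠ 0 := by
    simp [ae_iff, measure_singleton]
  refine lintegral_congr_ae ?_
  filter_upwards [hae] with ξ hξ
  have hpos : 0 < ‖ξ‖ := norm_pos_iff.2 hξ
  rw [mul_right_comm, ← ENNReal.ofReal_mul (by positivity), mul_comm]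
  congr 2
  rw [← Real.rpow_neg_one, ← Real.rpow_add hpos]
  congr 1
  push_cast
  ring
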